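/- Let f : ℝ → ℝ be Lipschitz continuous, 2π-periodic, with f(θ) ≥ m for some m > 0 and all θ, let θ : ℝ → ℝ solve θ̇ = f(θ), and set T := ∫₀^{2π} ds / f(s) and ω := 2π/T. Then for every k ∈ ℤ the time average of e^{−ikθ} over one period equals the phase average weighted by the density ω/(2π f): (1/T) ∫₀^{T} e^{−ikθ(t)} dt = (1/2π) ∫₀^{2π} e^{−iks} (ω/f(s)) ds. -/

import Mathlib

/-!
Along the flow `θ̇ = f(θ)` with `f > 0`, the substitution `s = θ(t)` turns `dt` into `ds / f(s)`.
Applied to the constant `1`, it says that the phase sweeps an interval in the time obtained by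
integrating `1 / f` over it. Since this travel time is strictly increasing in the endpoint, after
time `T` the phase has advanced by exactly one period. Applied to a periodic observable `g`, it
therefore turns the integral of `g ∘ θ` over `[0, T]` into the integral of `g / f` over one period.
-/

open MeasureTheory intervalIntegral

theorem strictMono_integral_of_pos {h : ℝ → ℝ} (hpos : ∀ x, 0 < h x)
    (hint : ∀ a b, IntervalIntegrable h volume a b) (a : ℝ) :
    StrictMono fun b => ∫ s in a..b, h s := by
  intro b c hbc
  have hgap : 0 < ∫ s in b..c, h s := intervalIntegral_pos_of_pos (hint b c) hpos hbc
  rw [← integral_interval_sub_left (hint a c) (hint a b)] at hgap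
  exact sub_pos.mp hgap

theorem periodic_exp_neg_I_mul_int_mul (k : ℤ) :
    Function.Periodic (fun s : ℝ => Complex.exp (-Complex.I * (k : ℂ) * (s : ℂ)))
      (2 * Real.pi) := by
  intro s
  rw [Complex.exp_eq_exp_iff_exists_int]
  exact ⟨-k, by push_cast; ring⟩

section AutonomousODE

variable {E : Type*} [NormedAddCommGroup E] [NormedSpace ℝ E] {f θ : ℝ → ℝ}

theorem integral_comp_eq_integral_inv_smul (hpos : ∀ x, 0 < f x)
    (hode : ∀ t, HasDerivAt θ (f (θ t)) t) (g : ℝ → E) (a b : ℝ) :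
    ∫ t in a..b, g (θ t) = ∫ s in θ a..θ b, (f s)⁻¹ • g s := by
  rw [← integral_deriv_smul_comp_of_deriv_nonneg
    (fun t _ => (hode t).continuousAt.continuousWithinAt) (fun t _ => hode t)
    (fun t _ => (hpos (θ t)).le)]
  simp only [Function.comp_apply, smul_inv_smul₀ (hpos _).ne']

theorem integral_inv_eq_sub (hpos : ∀ x, 0 < f x)
    (hode : ∀ t, HasDerivAt θ (f (θ t)) t) (a b : ℝ) :
    ∫ s in θ a..θ b, (f s)⁻¹ = b - a := by
  simpa using (integral_comp_eq_integral_inv_smul hpos hode (fun _ => (1 : ℝ)) a b).symm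

theorem map_add_integral_inv_eq_add_period {P : ℝ} (hP : P ≠ 0) (hper : Function.Periodic f P)
    (hpos : ∀ x, 0 < f x) (hint : IntervalIntegrable (fun s => (f s)⁻¹) volume 0 P)
    (hode : ∀ t, HasDerivAt θ (f (θ t)) t) (t : ℝ) :
    θ (t + ∫ s in (0 : ℝ)..P, (f s)⁻¹) = θ t + P := by
  have hper_inv : Function.Periodic (fun s => (f s)⁻¹) P := hper.comp (·⁻¹)
  have hint' := hper_inv.intervalIntegrable₀ hP hint
  refine (strictMono_integral_of_pos (fun s => inv_pos.mpr (hpos s)) hint' (θ t)).injective ?_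
  calc ∫ s in θ t..θ (t + ∫ s in (0 : ℝ)..P, (f s)⁻¹), (f s)⁻¹
      = ∫ s in (0 : ℝ)..P, (f s)⁻¹ := by rw [integral_inv_eq_sub hpos hode, add_sub_cancel_left]
    _ = ∫ s in θ t..θ t + P, (f s)⁻¹ := by
      rw [hper_inv.intervalIntegral_add_eq (θ t) 0, zero_add]

theorem integral_comp_eq_integral_inv_smul_of_periodic {P : ℝ} (hP : P ≠ 0)
    (hper : Function.Periodic f P) (hpos : ∀ x, 0 < f x)
    (hint : IntervalIntegrable (fun s => (f s)⁻¹) volume 0 P)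
    (hode : ∀ t, HasDerivAt θ (f (θ t)) t) {g : ℝ → E} (hg : Function.Periodic g P) :
    ∫ t in (0 : ℝ)..∫ s in (0 : ℝ)..P, (f s)⁻¹, g (θ t) =
      ∫ s in (0 : ℝ)..P, (f s)⁻¹ • g s := by
  have hend := map_add_integral_inv_eq_add_period hP hper hpos hint hode 0
  have hper_smul : Function.Periodic (fun s => (f s)⁻¹ • g s) P := fun s => by
    simp only [hper s, hg s]
  rw [zero_add] at hend
  rw [integral_comp_eq_integral_inv_smul hpos hode, hend,
    hper_smul.intervalIntegral_add_eq (θ 0) 0, zero_add]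

theorem protophase_density_time_average_general {P : ℝ} (hP : P ≠ 0)
    (hper : Function.Periodic f P) (hpos : ∀ x, 0 < f x)
    (hint : IntervalIntegrable (fun s => (f s)⁻¹) volume 0 P)
    (hode : ∀ t, HasDerivAt θ (f (θ t)) t) {T ω : ℝ} (hT : T = ∫ s in (0 : ℝ)..P, (f s)⁻¹)
    (hω : ω = P / T) {g : ℝ → E} (hg : Function.Periodic g P) :
    (1 / T) • ∫ t in (0 : ℝ)..T, g (θ t) = (1 / P) • ∫ s in (0 : ℝ)..P, (ω / f s) • g s := by
  have htime : ∫ t in (0 : ℝ)..T, g (θ t) = ∫ s in (0 : ℝ)..P, (f s)⁻¹ • g s :=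
    hT ▸ integral_comp_eq_integral_inv_smul_of_periodic hP hper hpos hint hode hg
  have hscale : 1 / P * ω = 1 / T := by rw [hω]; field_simp
  simp only [div_eq_mul_inv ω, mul_smul, intervalIntegral.integral_smul]
  rw [htime, smul_smul, hscale]

end AutonomousODE

/-- For a protophase `θ̇ = f(θ)` with `f` Lipschitz, 2π-periodic and
`≥ m > 0`, with `T = ∫₀^{2π} ds/f(s)` and `ω = 2π/T`, the time average of `e^{−ikθ}`
over one period equals the phase average weighted by the density `ω/(2πf)`:
`(1/T)∫₀^T e^{−ikθ(t)} dt = (1/2π)∫₀^{2π} e^{−iks}(ω/f(s)) ds`. -/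
theorem protophase_density_time_average
    (f : ℝ → ℝ) (K : NNReal) (hf : LipschitzWith K f)
    (hper : ∀ x, f (x + 2 * Real.pi) = f x)
    (m : ℝ) (hm : 0 < m) (hfm : ∀ x, m ≤ f x)
    (θ : ℝ → ℝ) (hode : ∀ t, HasDerivAt θ (f (θ t)) t)
    (T ω : ℝ) (hT : T = ∫ s in (0 : ℝ)..(2 * Real.pi), 1 / f s)
    (hω : ω = 2 * Real.pi / T) :
    ∀ k : ℤ,
      (1 / (T : ℂ)) * ∫ t in (0 : ℝ)..T, Complex.exp (-Complex.I * (k : ℂ) * (θ t : ℂ))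
        = (1 / (2 * Real.pi) : ℂ) *
          ∫ s in (0 : ℝ)..(2 * Real.pi),
            Complex.exp (-Complex.I * (k : ℂ) * (s : ℂ)) * ((ω / f s : ℝ) : ℂ) := by
  intro k
  have hpos : ∀ x, 0 < f x := fun x => hm.trans_le (hfm x)
  have hint : IntervalIntegrable (fun s => (f s)⁻¹) volume 0 (2 * Real.pi) :=
    (hf.continuous.inv₀ fun x => (hpos x).ne').intervalIntegrable _ _
  simpa [mul_comm] using protophase_density_time_average_general Real.two_pi_pos.ne' hper hpos hint
    hode (by simpa using hT) hω (periodic_exp_neg_I_mul_int_mul k)
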